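/- Let $k$ be an algebraically closed field of characteristic different from $2$ and $3$, let $n\ge 0$, and let $P_3(k^n)$ be the space of homogeneous cubic polynomials in $k[x_1,\dots,x_n]$. The q-rank $\operatorname{qrank}(f)$ of $f\in P_3(k^n)$ is the least $r\ge 0$ such that $f=\sum_{i=1}^r \ell_i q_i$ with each $\ell_i$ homogeneous of degree $1$ and each $q_i$ homogeneous of degree $2$. The group $GL_n(k)$ acts on $P_3(k^n)$ by invertible linear substitution of the variables, and the Zariski closure of a subset of $P_3(k^n)$ is the set of common zeros of all polynomial functions of the coefficients that vanish on the subset. For an integer $m\ge 0$ put $\xi(m)=\left\lfloor \frac{\sqrt{8m+17}-3}{2}\right\rfloor$. Separable degeneration: let $f\in P_3(k^n)$ have q-rank $r$, and assume that $f$ is not the cube of a nonzero linear form (this holds in particular whenever $r\neq 1$). Then there exist $g$ in the Zariski closure of the $GL_n(k)$-orbit of $f$, a subset $S\subseteq\{1,\dots,n\}$, an integer $m\ge 0$, homogeneous degree-$1$ polynomials $\ell_1,\dots,\ell_m$ using only the variables $x_j$ with $j\in S$, and homogeneous degree-$2$ polynomials $q_1,\dots,q_m$ using only the variables $x_j$ with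 $j\notin S$, such that $g=\sum_{i=1}^m \ell_i q_i$ and $2\operatorname{qrank}(g)\ge \xi(r)$. -/

import Mathlib

/-- The q-rank of a multivariate polynomial `f`: the least `m` such that
`f = ∑ ℓᵢ · qᵢ` with each `ℓᵢ` homogeneous of degree 1 and each `qᵢ` homogeneous
of degree 2, as an element of `ℕ∞`. -/
noncomputable def polyQRank {k : Type*} [Field k] {n : ℕ}
    (f : MvPolynomial (Fin n) k) : ℕ∞ :=
  sInf {r : ℕ∞ | ∃ m : ℕ, r = m ∧
    ∃ ℓ q : Fin m → MvPolynomial (Fin n) k,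
      (∀ i, (ℓ i).IsHomogeneous 1) ∧ (∀ i, (q i).IsHomogeneous 2) ∧
        f = ∑ i, ℓ i * q i}

/-- The action of `GLₙ(k)` on `MvPolynomial (Fin n) k` by invertible linear
substitution of the variables. -/
noncomputable def glAct {k : Type*} [Field k] {n : ℕ} (g : GL (Fin n) k)
    (f : MvPolynomial (Fin n) k) : MvPolynomial (Fin n) k :=
  MvPolynomial.aeval
    (fun j => ∑ i, MvPolynomial.C ((g : Matrix (Fin n) (Fin n) k) i j) *
      MvPolynomial.X i) f

/-- The `GLₙ(k)`-orbit of a polynomial. -/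
def glOrbit {k : Type*} [Field k] {n : ℕ} (f : MvPolynomial (Fin n) k) :
    Set (MvPolynomial (Fin n) k) :=
  {h | ∃ g : GL (Fin n) k, h = glAct g f}

/-- `g` lies in the Zariski closure of `S ⊆ MvPolynomial (Fin n) k`: every polynomial
in the coefficients (coordinates w.r.t. the monomial basis) vanishing on `S`
vanishes at `g`. -/
def InZariskiClosure {k : Type*} [Field k] {n : ℕ}
    (S : Set (MvPolynomial (Fin n) k)) (g : MvPolynomial (Fin n) k) : Prop :=
  ∀ P : MvPolynomial (Fin n →₀ ℕ) k,
    (∀ f ∈ S, MvPolynomial.eval (fun m => MvPolynomial.coeff m f) P = 0) →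
    MvPolynomial.eval (fun m => MvPolynomial.coeff m g) P = 0

/-- `ξ(d) = ⌊(√(8d+17) − 3)/2⌋`. -/
noncomputable def xi (d : ℕ) : ℕ := ⌊(Real.sqrt (8 * d + 17) - 3) / 2⌋₊

open MvPolynomial

/-- The origin of affine `d`-space has height at least `d`. -/
theorem le_height_vanishingIdeal_zero (k : Type*) [Field k] (d : ℕ) :
    (d : ℕ∞) ≤ (vanishingIdeal k ({0} : Set (Fin d → k))).height := by
  let φ : ℕ → MvPolynomial (Fin d) k →ₐ[k] MvPolynomial (Fin d) k := fun i =>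
    aeval fun j => if (j : ℕ) < i then 0 else X j
  have hφX : ∀ i j, φ i (X j) = if (j : ℕ) < i then 0 else X j := fun i j => aeval_X _ _
  have hprime : ∀ i, (RingHom.ker (φ i)).IsPrime := fun i => RingHom.ker_isPrime _
  have hle : ∀ i, i ≤ d → (i : ℕ∞) ≤ (RingHom.ker (φ i)).height := by
    intro i
    induction i with
    | zero => intro _; simp
    | succ i ih =>
      intro hi
      have hlt : RingHom.ker (φ i) < RingHom.ker (φ (i + 1)) := by
        refine lt_of_le_of_ne ?_ ?_
        · intro p hp
          have hcomp : (φ (i + 1)).comp (φ i) = φ (i + 1) := by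
            ext1 j
            simp only [AlgHom.comp_apply, hφX]
            split_ifs with h1 h2 h2
            · simp
            · omega
            · simp [hφX, h2]
            · simp [hφX, h2]
          rw [RingHom.mem_ker] at hp ⊢
          rw [← hcomp, AlgHom.comp_apply, hp, map_zero]
        · intro h
          have h1 : (X ⟨i, hi⟩ : MvPolynomial (Fin d) k) ∈ RingHom.ker (φ (i + 1)) := by
            rw [RingHom.mem_ker, hφX]; simp
          rw [← h, RingHom.mem_ker, hφX] at h1
          simp at h1
      have h1 := @Ideal.height_add_one_le_of_lt_of_isPrime _ _ _ _ (hprime i) (hprime (i + 1)) hlt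
      push_cast
      exact (add_le_add_left (ih (by omega)) 1).trans h1
  refine (hle d le_rfl).trans (Ideal.height_mono ?_)
  intro p hp
  rw [RingHom.mem_ker] at hp
  rw [mem_vanishingIdeal_singleton_iff]
  have hcomp : (aeval (0 : Fin d → k)).comp (φ d) = aeval (0 : Fin d → k) := by
    ext j
    simp [hφX]
  rw [← hcomp, AlgHom.comp_apply, hp, map_zero]

/-- Fewer homogeneous equations than unknowns have a nontrivial common solution. -/
theorem exists_ne_zero_common_zero {k : Type*} [Field k] [IsAlgClosed k] {d : ℕ} {ι : Type*}
    [Fintype ι] (p : ι → MvPolynomial (Fin d) k) (hp : ∀ i, eval 0 (p i) = 0)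
    (hcard : Fintype.card ι < d) :
    ∃ x : Fin d → k, x ≠ 0 ∧ ∀ i, eval x (p i) = 0 := by
  classical
  by_contra! hcon
  have hzero : zeroLocus k (Ideal.span (Set.range p)) = {0} := by
    rw [zeroLocus_span]
    ext x
    simp only [Set.mem_ofPred_eq, Set.mem_singleton_iff, Set.forall_mem_range]
    constructor
    · intro h
      by_contra hx
      obtain ⟨i, hi⟩ := hcon x hx
      exact hi (by simpa [aeval_eq_eval] using h i)
    · rintro rfl i
      simpa [aeval_eq_eval] using hp i
  have hrad := vanishingIdeal_zeroLocus_eq_radical (K := k) (Ideal.span (Set.range p))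
  rw [hzero] at hrad
  have hmax : (vanishingIdeal k ({0} : Set (Fin d → k))).IsMaximal :=
    isMaximal_iff_eq_vanishingIdeal_singleton.2 ⟨0, rfl⟩
  have hmin : vanishingIdeal k ({0} : Set (Fin d → k)) ∈
      (Ideal.span (Set.range p)).minimalPrimes := by
    rw [← Ideal.radical_minimalPrimes, ← hrad, Ideal.minimalPrimes_eq_subsingleton_self]
    rfl
  have h1 := Ideal.height_le_card_of_mem_minimalPrimes_span (Set.finite_range p) hmin
  have h2 : (Set.range p).ncard ≤ Fintype.card ι := by
    rw [← Set.image_univ]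
    exact (Set.ncard_image_le Set.finite_univ).trans (by simp)
  have h3 := (le_height_vanishingIdeal_zero k d).trans h1
  have h4 : d ≤ (Set.range p).ncard := by exact_mod_cast h3
  omega

section Trilinear

open Module Submodule

variable {k E : Type*} [Field k] [AddCommGroup E] [Module k E]

/-- Symmetry of a trilinear form, expressed on two generating transpositions. -/
structure IsSymmTrilinear (F : E →ₗ[k] E →ₗ[k] E →ₗ[k] k) : Prop where
  swap_left : ∀ x y z, F x y z = F y x z
  swap_right : ∀ x y z, F x y z = F x z y

/-- A subspace on which a trilinear form vanishes identically. -/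
def IsTotallyIsotropic (F : E →ₗ[k] E →ₗ[k] E →ₗ[k] k) (W : Submodule k E) : Prop :=
  ∀ x ∈ W, ∀ y ∈ W, ∀ z ∈ W, F x y z = 0

variable {F : E →ₗ[k] E →ₗ[k] E →ₗ[k] k}

theorem trilinear_sum_smul (F : E →ₗ[k] E →ₗ[k] E →ₗ[k] k) {ι : Type*} [Fintype ι] (x y z : ι → k)
    (b : ι → E) :
    F (∑ i, x i • b i) (∑ j, y j • b j) (∑ l, z l • b l) =
      ∑ i, ∑ j, ∑ l, F (b i) (b j) (b l) * x i * y j * z l := by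
  rw [map_sum F, LinearMap.sum_apply, LinearMap.sum_apply]
  refine Finset.sum_congr rfl fun i _ => ?_
  rw [map_sum (F _), LinearMap.sum_apply]
  refine Finset.sum_congr rfl fun j _ => ?_
  rw [map_sum]
  refine Finset.sum_congr rfl fun l _ => ?_
  simp only [map_smul, LinearMap.smul_apply, smul_eq_mul]
  ring

theorem IsTotallyIsotropic.mono {V W : Submodule k E} (h : IsTotallyIsotropic F W) (hVW : V ≤ W) :
    IsTotallyIsotropic F V :=
  fun x hx y hy z hz => h x (hVW hx) y (hVW hy) z (hVW hz)

theorem IsTotallyIsotropic.sup (hF : IsSymmTrilinear F) {P Q : Submodule k E}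
    (hP : IsTotallyIsotropic F P) (hQ : IsTotallyIsotropic F Q)
    (hPPQ : ∀ x ∈ P, ∀ y ∈ P, ∀ z ∈ Q, F x y z = 0)
    (hPQQ : ∀ x ∈ P, ∀ y ∈ Q, ∀ z ∈ Q, F x y z = 0) :
    IsTotallyIsotropic F (P ⊔ Q) := by
  intro x hx y hy z hz
  obtain ⟨a, ha, b, hb, rfl⟩ := mem_sup.1 hx
  obtain ⟨c, hc, d, hd, rfl⟩ := mem_sup.1 hy
  obtain ⟨e, he, g, hg, rfl⟩ := mem_sup.1 hz
  simp only [map_add, LinearMap.add_apply]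
  rw [hP a ha c hc e he, hPPQ a ha c hc g hg, hF.swap_right a d e, hPPQ a ha e he d hd,
    hPQQ a ha d hd g hg, hF.swap_left b c e, hF.swap_right c b e, hPPQ c hc e he b hb,
    hF.swap_left b c g, hPQQ c hc b hb g hg, hF.swap_right b d e, hF.swap_left b e d,
    hPQQ e he b hb d hd, hQ b hb d hd g hg]
  simp

/-- Polarization: a symmetric trilinear form is determined by its restriction to the diagonal. -/
theorem IsTotallyIsotropic.of_diagonal (hF : IsSymmTrilinear F) (h2 : (2 : k) ≠ 0)
    (h3 : (3 : k) ≠ 0) {W : Submodule k E} (h : ∀ x ∈ W, F x x x = 0) :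
    IsTotallyIsotropic F W := by
  have h12 : ∀ x ∈ W, ∀ y ∈ W, F x x y = 0 := by
    intro x hx y hy
    have e1 := h _ (W.add_mem hx hy)
    have e2 := h _ (W.sub_mem hx hy)
    simp only [map_add, map_sub, LinearMap.add_apply, LinearMap.sub_apply, h x hx, h y hy,
      hF.swap_left y x, hF.swap_right x y x, hF.swap_right y y x] at e1 e2
    have e3 : (2 * 3 : k) * F x x y = 0 := by linear_combination e1 - e2
    simpa [h2, h3] using e3
  intro x hx y hy z hz
  have e1 := h12 _ (W.add_mem hx hy) z hz
  simp only [map_add, LinearMap.add_apply, h12 x hx z hz, h12 y hy z hz,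
    hF.swap_left y x] at e1
  have e3 : (2 : k) * F x y z = 0 := by linear_combination e1
  simpa [h2] using e3

variable [FiniteDimensional k E]

/-- A totally isotropic subspace can be enlarged by a vector of `U` as soon as `U` has more
dimensions than there are equations. -/
theorem IsTotallyIsotropic.exists_extension [IsAlgClosed k] (hF : IsSymmTrilinear F)
    {D U : Submodule k E} (hD : IsTotallyIsotropic F D) {κ : Type*} [Fintype κ]
    (L : κ → E →ₗ[k] k)
    (hL : ∀ v ∈ U, (∀ i, L i v = 0) → ∀ x ∈ D, ∀ y ∈ D, F x y v = 0)
    (hcard : Fintype.card κ + finrank k D + 1 < finrank k U) :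
    ∃ v ∈ U, v ≠ 0 ∧ IsTotallyIsotropic F (D ⊔ k ∙ v) := by
  let b := finBasis k U
  let d := finBasis k D
  let p : κ ⊕ Option (Fin (finrank k D)) → MvPolynomial (Fin (finrank k U)) k := fun s =>
    match s with
    | .inl i => ∑ j, C (L i (b j)) * X j
    | .inr (some i) => ∑ j, ∑ l, C (F (d i) (b j) (b l)) * X j * X l
    | .inr none => ∑ i, ∑ j, ∑ l, C (F (b i) (b j) (b l)) * X i * X j * X l
  obtain ⟨x, hx0, hx⟩ := exists_ne_zero_common_zero p
    (by rintro (i | _ | i) <;> simp [p]) (by simpa [← add_assoc] using hcard)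
  have hv : ((b.equivFun.symm x : U) : E) = ∑ j, x j • (b j : E) := by
    simp [Basis.equivFun_symm_apply]
  set v : E := ((b.equivFun.symm x : U) : E) with hvdef
  have hlin : ∀ i, L i v = 0 := by
    intro i
    have := hx (.inl i)
    simp only [p, map_sum, map_mul, eval_C, eval_X] at this
    rw [hv, map_sum, ← this]
    simp [mul_comm]
  have hquad : ∀ y ∈ D, F y v v = 0 := by
    have hd : ∀ i, F (d i) v v = 0 := by
      intro i
      have := hx (.inr (some i))
      simp only [p, map_sum, map_mul, eval_C, eval_X] at this
      rw [hv, ← this]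
      simp only [map_sum, map_smul, LinearMap.sum_apply, LinearMap.smul_apply, smul_eq_mul,
        Finset.mul_sum]
      rw [Finset.sum_comm]
      refine Finset.sum_congr rfl fun a _ => Finset.sum_congr rfl fun c _ => ?_
      ring
    intro y hy
    have hsum := congrArg (Subtype.val) (d.sum_repr ⟨y, hy⟩)
    simp only [coe_sum, Submodule.coe_smul] at hsum
    rw [← hsum]
    simp [LinearMap.sum_apply, hd]
  have hcub : F v v v = 0 := by
    have := hx (.inr none)
    simp only [p, map_sum, map_mul, eval_C, eval_X] at this
    rw [hv, trilinear_sum_smul, this]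
  refine ⟨v, coe_mem _, ?_, hD.sup hF ?_ ?_ ?_⟩
  · rwa [hvdef, Ne, ZeroMemClass.coe_eq_zero, LinearEquiv.map_eq_zero_iff]
  · intro x hx y hy z hz
    obtain ⟨a, rfl⟩ := mem_span_singleton.1 hx
    obtain ⟨b, rfl⟩ := mem_span_singleton.1 hy
    obtain ⟨c, rfl⟩ := mem_span_singleton.1 hz
    simp [hcub]
  · intro x hx y hy z hz
    obtain ⟨c, rfl⟩ := mem_span_singleton.1 hz
    simp [hL v (coe_mem _) hlin x hx y hy]
  · intro x hx y hy z hz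
    obtain ⟨b, rfl⟩ := mem_span_singleton.1 hy
    obtain ⟨c, rfl⟩ := mem_span_singleton.1 hz
    simp [hquad x hx]

end Trilinear

section Isotropic

open Module Submodule

variable {k E : Type*} [Field k] [AddCommGroup E] [Module k E]
variable {F : E →ₗ[k] E →ₗ[k] E →ₗ[k] k}

theorem Basis.trilinear_eq_zero (hF : IsSymmTrilinear F) {D : Submodule k E} {t : ℕ}
    (d : Basis (Fin t) k D) {v : E} (h : ∀ i j, i ≤ j → F (d i) (d j) v = 0) :
    ∀ x ∈ D, ∀ y ∈ D, F x y v = 0 := by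
  have hd : ∀ i j, F (d i) (d j) v = 0 := by
    intro i j
    rcases le_total i j with hij | hij
    · exact h i j hij
    · rw [hF.swap_left]; exact h j i hij
  intro x hx y hy
  have hsx := congrArg Subtype.val (d.sum_repr ⟨x, hx⟩)
  have hsy := congrArg Subtype.val (d.sum_repr ⟨y, hy⟩)
  simp only [coe_sum, Submodule.coe_smul] at hsx hsy
  rw [← hsx, ← hsy]
  simp [LinearMap.sum_apply, hd]

theorem two_mul_card_ordered_pairs (t : ℕ) :
    2 * Fintype.card {p : Fin t × Fin t // p.1 ≤ p.2} = t * (t + 1) := by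
  rw [← Fintype.card_congr (Sym2.sortEquiv (α := Fin t)), Sym2.card, Fintype.card_fin,
    Nat.choose_two_right, Nat.add_sub_cancel, mul_comm (t + 1) t]
  exact Nat.mul_div_cancel' (Nat.even_mul_succ_self t).two_dvd

theorem Submodule.exists_relative_compl {C U : Submodule k E} (h : C ≤ U) :
    ∃ U₀ ≤ U, Disjoint C U₀ ∧ C ⊔ U₀ = U := by
  obtain ⟨C', hC'⟩ := C.exists_isCompl
  refine ⟨C' ⊓ U, inf_le_right, hC'.disjoint.mono_right inf_le_left, ?_⟩
  rw [← sup_inf_assoc_of_le C' h, hC'.sup_eq_top, top_inf_eq]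

theorem Submodule.disjoint_sup_sup {V W P Q C B : Submodule k E} (hVW : Disjoint V W)
    (hP : P ≤ W) (hB : B ≤ W) (hPB : Disjoint P B) (hC : C ≤ V) (hQ : Q ≤ V)
    (hCQ : Disjoint C Q) : Disjoint (P ⊔ Q) (C ⊔ B) := by
  rw [disjoint_def]
  intro x hx hx'
  obtain ⟨p, hp, q, hq, rfl⟩ := mem_sup.1 hx
  obtain ⟨c, hc, b, hb, h⟩ := mem_sup.1 hx'
  have e : c - q = p - b := by
    rw [sub_eq_sub_iff_add_eq_add, h, add_comm]
  have h0 : c - q = 0 := disjoint_def.1 hVW _ (V.sub_mem (hC hc) (hQ hq))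
    (e ▸ W.sub_mem (hP hp) (hB hb))
  have hcq : c = q := sub_eq_zero.1 h0
  have hpb : p = b := sub_eq_zero.1 (e ▸ h0)
  rw [disjoint_def.1 hCQ q (hcq ▸ hc) hq, disjoint_def.1 hPB p hp (hpb ▸ hb), add_zero]

theorem IsTotallyIsotropic.sup_of_split (hF : IsSymmTrilinear F) {A' B' C : Submodule k E}
    (hC : IsTotallyIsotropic F C) (hB : IsTotallyIsotropic F B') (hCA : C ≤ A')
    (hABB : ∀ a ∈ A', ∀ b ∈ B', ∀ c ∈ B', F a b c = 0)
    (hBAA : ∀ b ∈ B', ∀ a ∈ A', ∀ c ∈ A', F b a c = 0) :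
    IsTotallyIsotropic F (C ⊔ B') :=
  hC.sup hF hB
    (fun x hx y hy z hz => by
      rw [hF.swap_right, hF.swap_left]; exact hBAA z hz x (hCA hx) y (hCA hy))
    (fun x hx y hy z hz => hABB x (hCA hx) y hy z hz)

variable [FiniteDimensional k E]

theorem Submodule.finrank_sup_of_disjoint {P Q : Submodule k E} (h : Disjoint P Q) :
    finrank k ↥(P ⊔ Q) = finrank k P + finrank k Q := by
  have := finrank_sup_add_finrank_inf_eq P Q
  rw [h.eq_bot, finrank_bot] at this
  exact this

/-- A cubic form in sufficiently many variables vanishes on a subspace of given dimension. -/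
theorem exists_totallyIsotropic_le [IsAlgClosed k] (hF : IsSymmTrilinear F) (t : ℕ)
    (U : Submodule k E) (hU : t * (t + 3) ≤ 2 * finrank k U) :
    ∃ C ≤ U, finrank k C = t ∧ IsTotallyIsotropic F C := by
  induction t with
  | zero =>
    refine ⟨⊥, bot_le, finrank_bot k E, ?_⟩
    intro x hx y _ z _
    rw [(mem_bot k).1 hx]; simp
  | succ t ih =>
    obtain ⟨C, hCU, hCt, hC⟩ := ih (by nlinarith)
    obtain ⟨U₀, hU₀, hdisj, hsup⟩ := exists_relative_compl hCU
    have hdim := finrank_sup_of_disjoint hdisj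
    rw [hsup, hCt] at hdim
    let d := finBasisOfFinrankEq k C hCt
    have hcard := two_mul_card_ordered_pairs t
    obtain ⟨v, hv, hv0, hiso⟩ := hC.exists_extension hF (U := U₀)
      (fun p : {p : Fin t × Fin t // p.1 ≤ p.2} => F (d p.1.1) (d p.1.2))
      (fun v _ hv => Basis.trilinear_eq_zero hF d fun i j hij => hv ⟨(i, j), hij⟩)
      (by rw [hCt]; nlinarith)
    have hvU : (k ∙ v) ≤ U₀ := (span_singleton_le_iff_mem _ _).2 hv
    refine ⟨C ⊔ k ∙ v, sup_le hCU (hvU.trans hU₀), ?_, hiso⟩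
    rw [finrank_sup_of_disjoint (hdisj.mono_right hvU), hCt, finrank_span_singleton hv0]

/-- Every mixed part `P ⊗ Q ⊗ Q` of `F` which is the lowest-weight part for a suitable
one-parameter subgroup vanishes on a product of subspaces of total codimension at most `u`. -/
def MixedPartsBounded (F : E →ₗ[k] E →ₗ[k] E →ₗ[k] k) (u : ℕ) : Prop :=
  ∀ P Q : Submodule k E, Disjoint P Q →
    (IsTotallyIsotropic F Q ∨
      (IsTotallyIsotropic F P ∧ ∀ x ∈ P, ∀ y ∈ P, ∀ z ∈ Q, F x y z = 0)) →
    ∃ A ≤ P, ∃ B ≤ Q, (∀ a ∈ A, ∀ b ∈ B, ∀ c ∈ B, F a b c = 0) ∧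
      finrank k P + finrank k Q ≤ finrank k A + finrank k B + u

theorem MixedPartsBounded.exists_split {u : ℕ} (hF : IsSymmTrilinear F)
    (hK : MixedPartsBounded F u) {V W : Submodule k E} (hVW : IsCompl V W)
    (hW : IsTotallyIsotropic F W) :
    ∃ A ≤ V, ∃ B ≤ W, ∃ A' ≤ A, ∃ B' ≤ B,
      (∀ a ∈ A, ∀ b ∈ B, ∀ c ∈ B, F a b c = 0) ∧
      (∀ b ∈ B', ∀ a ∈ A', ∀ c ∈ A', F b a c = 0) ∧
      finrank k E ≤ finrank k A + finrank k B + u ∧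
      finrank k E ≤ finrank k A' + finrank k B' + 2 * u := by
  obtain ⟨A, hA, B, hB, hABB, hdim⟩ := hK V W hVW.disjoint (Or.inl hW)
  have hdisj : Disjoint B A := (hVW.disjoint.mono hA hB).symm
  obtain ⟨B', hB', A', hA', hBAA, hdim'⟩ := hK B A hdisj
    (Or.inr ⟨hW.mono hB, fun x hx y hy z hz => by
      rw [hF.swap_right, hF.swap_left]; exact hABB z hz x hx y hy⟩)
  have := finrank_add_eq_of_isCompl hVW
  exact ⟨A, hA, B, hB, A', hA', B', hB', hABB, hBAA, by omega, by omega⟩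

/-- Two disjoint totally isotropic subspaces cannot both be large. -/
theorem MixedPartsBounded.finrank_add_le {u r : ℕ} (hF : IsSymmTrilinear F)
    (hK : MixedPartsBounded F u)
    (hmax : ∀ W : Submodule k E, IsTotallyIsotropic F W → finrank k W + r ≤ finrank k E)
    {C W : Submodule k E} (hdisj : Disjoint C W) (hC : IsTotallyIsotropic F C)
    (hW : IsTotallyIsotropic F W) :
    finrank k W + finrank k C + r ≤ finrank k E + 2 * u := by
  obtain ⟨V, hCV, hVW⟩ := hdisj.exists_isCompl
  obtain ⟨A, hA, B, hB, A', hA', B', hB', hABB, hBAA, -, hdim⟩ := hK.exists_split hF hVW hW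
  have hiso := (hC.mono (inf_le_left : C ⊓ A' ≤ C)).sup_of_split hF (hW.mono (hB'.trans hB))
    inf_le_right (fun a ha b hb c hc => hABB a (hA' ha) b (hB' hb) c (hB' hc)) hBAA
  have h1 := hmax _ hiso
  rw [finrank_sup_of_disjoint (hVW.disjoint.mono (inf_le_right.trans (hA'.trans hA))
    (hB'.trans hB))] at h1
  have h2 := finrank_sup_add_finrank_inf_eq C A'
  have h3 : finrank k ↥(C ⊔ A') ≤ finrank k V := finrank_mono (sup_le hCV (hA'.trans hA))
  have h4 := finrank_add_eq_of_isCompl hVW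
  omega

/-- If all the mixed parts of `F` are bounded by `u`, and the codimension `r` of a maximal totally
isotropic subspace `W` is large compared with `u`, then `r = 1` and `W` annihilates `F`. -/
theorem MixedPartsBounded.eq_one_and_annihilated [IsAlgClosed k] {u r : ℕ} (hF : IsSymmTrilinear F)
    (hK : MixedPartsBounded F u)
    (hmax : ∀ W : Submodule k E, IsTotallyIsotropic F W → finrank k W + r ≤ finrank k E)
    {W : Submodule k E} (hW : IsTotallyIsotropic F W) (hWr : finrank k W + r = finrank k E)
    (hr : (2 * u + 1) * (2 * u + 4) ≤ 2 * r + 2) :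
    r = 1 ∧ ∀ w ∈ W, ∀ x y, F w x y = 0 := by
  obtain ⟨V, hWV⟩ := W.exists_isCompl
  have hVW := hWV.symm
  have hV := finrank_add_eq_of_isCompl hVW
  obtain ⟨A, hA, B, hB, A', hA', B', hB', hABB, hBAA, hdim, hdim'⟩ := hK.exists_split hF hVW hW
  have hAd := finrank_mono hA
  have hBd := finrank_mono hB
  have hAd' := finrank_mono hA'
  have hBd' := finrank_mono hB'
  obtain ⟨C, hCA, hCt, hC⟩ := exists_totallyIsotropic_le hF (2 * u) A' (by nlinarith)
  have hCB := hC.sup_of_split hF (hW.mono (hB'.trans hB)) hCA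
    (fun a ha b hb c hc => hABB a (hA' ha) b (hB' hb) c (hB' hc)) hBAA
  have hCBdim : finrank k ↥(C ⊔ B') = finrank k C + finrank k B' :=
    finrank_sup_of_disjoint (hVW.disjoint.mono (hCA.trans (hA'.trans hA)) (hB'.trans hB))
  have h1 := hmax _ hCB
  have hA'V : A' = V := eq_of_le_of_finrank_eq (hA'.trans hA) (by omega)
  have hAV : A = V := le_antisymm hA (hA'V ▸ hA')
  subst hA'V
  subst hAV
  have hB'd : finrank k B' + 2 * u = finrank k W := by omega
  obtain ⟨V₀, hV₀, hCV₀, hsupV⟩ := exists_relative_compl hCA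
  have hV₀d := finrank_sup_of_disjoint hCV₀
  rw [hsupV, hCt] at hV₀d
  rcases Nat.eq_zero_or_pos u with rfl | hu
  · have hB'W : B' = W := eq_of_le_of_finrank_eq (hB'.trans hB) (by omega)
    have hBW : B = W := le_antisymm hB (hB'W ▸ hB')
    subst hB'W
    subst hBW
    have hr1 : r = 1 := by
      by_contra hr1
      obtain ⟨C₁, hC₁, hC₁d, hC₁i⟩ := exists_totallyIsotropic_le hF 1 A (by omega)
      have := hK.finrank_add_le hF hmax (hVW.disjoint.mono_left hC₁) hC₁i hW
      omega
    refine ⟨hr1, fun w hw x y => ?_⟩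
    have hx : x ∈ A ⊔ B := hVW.sup_eq_top ▸ mem_top
    have hy : y ∈ A ⊔ B := hVW.sup_eq_top ▸ mem_top
    obtain ⟨a, ha, b, hb, rfl⟩ := mem_sup.1 hx
    obtain ⟨c, hc, d, hd, rfl⟩ := mem_sup.1 hy
    simp only [map_add, LinearMap.add_apply]
    rw [hBAA w hw a ha c hc, hW w hw b hb d hd, hF.swap_left w a d, hABB a ha w hw d hd,
      hF.swap_right w b c, hF.swap_left w c b, hABB c hc w hw b hb]
    simp
  · have hne : ∃ x ∈ B, x ∉ B' := by
      by_contra! hcon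
      have := finrank_mono (show B ≤ B' from hcon)
      omega
    obtain ⟨x, hxB, hxB'⟩ := hne
    have hx0 : x ≠ 0 := fun h => hxB' (h ▸ B'.zero_mem)
    have hxd : Disjoint B' (k ∙ x) := by
      rw [disjoint_span_singleton' hx0]; exact hxB'
    have hxW : (k ∙ x) ≤ W := (span_singleton_le_iff_mem _ _).2 (hB hxB)
    have hB'W : B' ≤ W := hB'.trans hB
    obtain ⟨D, hDW, hDd, hDs⟩ := exists_relative_compl (C := B' ⊔ k ∙ x) (U := W)
      (sup_le hB'W hxW)
    have hDdim := finrank_sup_of_disjoint hDd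
    rw [hDs, finrank_sup_of_disjoint hxd, finrank_span_singleton hx0] at hDdim
    obtain ⟨s, hs⟩ : ∃ s, finrank k D = s := ⟨_, rfl⟩
    have hPdim : finrank k ↥(D ⊔ k ∙ x) = s + 1 := by
      rw [finrank_sup_of_disjoint (hDd.symm.mono_right le_sup_right), hs,
        finrank_span_singleton hx0]
    have hPi : IsTotallyIsotropic F (D ⊔ k ∙ x) := hW.mono (sup_le hDW hxW)
    let d := finBasisOfFinrankEq k D hs
    have hcard := two_mul_card_ordered_pairs s
    obtain ⟨v, hv, hv0, hiso⟩ := hPi.exists_extension hF (U := V₀)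
      (Sum.elim (fun p : {p : Fin s × Fin s // p.1 ≤ p.2} => F (d p.1.1) (d p.1.2))
        (fun i : Fin s => F (d i) x))
      (fun v hv hcond => by
        have hDD := Basis.trilinear_eq_zero hF d fun i j hij => hcond (.inl ⟨(i, j), hij⟩)
        have hDx : ∀ y ∈ D, F y x v = 0 := by
          intro y hy
          have hsum := congrArg Subtype.val (d.sum_repr ⟨y, hy⟩)
          simp only [coe_sum, Submodule.coe_smul] at hsum
          rw [← hsum]
          have : ∀ i, F (d i) x v = 0 := fun i => hcond (.inr i)
          simp [LinearMap.sum_apply, this]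
        have hxx : F x x v = 0 := by
          rw [hF.swap_right, hF.swap_left]; exact hABB v (hV₀ hv) x hxB x hxB
        intro y hy z hz
        obtain ⟨y₁, hy₁, y₂, hy₂, rfl⟩ := mem_sup.1 hy
        obtain ⟨z₁, hz₁, z₂, hz₂, rfl⟩ := mem_sup.1 hz
        obtain ⟨a, rfl⟩ := mem_span_singleton.1 hy₂
        obtain ⟨c, rfl⟩ := mem_span_singleton.1 hz₂
        simp [hDD y₁ hy₁ z₁ hz₁, hDx y₁ hy₁, hF.swap_left x z₁ v, hDx z₁ hz₁, hxx])
      (by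
        rw [hPdim, Fintype.card_sum, Fintype.card_fin]
        have hsu : 2 * u = s + 1 := by omega
        rw [hsu] at hr
        nlinarith)
    have hvV : (k ∙ v) ≤ V₀ := (span_singleton_le_iff_mem _ _).2 hv
    have hPB : Disjoint (D ⊔ k ∙ x) B' := by
      rw [sup_comm, disjoint_comm]
      exact hxd.disjoint_sup_right_of_disjoint_sup_left hDd
    have hfin := hK.finrank_add_le hF hmax
      (disjoint_sup_sup hVW.disjoint (sup_le hDW hxW) hB'W hPB hCA (hvV.trans hV₀)
        (hCV₀.mono_right hvV)) hiso hCB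
    rw [finrank_sup_of_disjoint (hVW.disjoint.symm.mono (sup_le hDW hxW) (hvV.trans hV₀)), hPdim,
      finrank_span_singleton hv0] at hfin
    omega

end Isotropic

section CubicForms

open Module Submodule

variable {k : Type*} [Field k] {n : ℕ}

theorem MvPolynomial.pderiv_pderiv_comm {σ R : Type*} [CommRing R] (i j : σ)
    (p : MvPolynomial σ R) : pderiv i (pderiv j p) = pderiv j (pderiv i p) := by
  classical
  have h : ⁅(pderiv i : Derivation R (MvPolynomial σ R) (MvPolynomial σ R)),
      (pderiv j : Derivation R (MvPolynomial σ R) (MvPolynomial σ R))⁆ = 0 := by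
    refine MvPolynomial.derivation_ext fun l => ?_
    rw [Derivation.commutator_apply, pderiv_X, pderiv_X, Pi.single_apply, Pi.single_apply]
    split_ifs <;> simp
  have := congrArg (fun D => D p) h
  simpa [Derivation.commutator_apply, sub_eq_zero] using this

theorem MvPolynomial.IsHomogeneous.eval_zero_eq {σ R : Type*} [CommSemiring R]
    {p : MvPolynomial σ R} (hp : p.IsHomogeneous 0) (x : σ → R) : eval x p = coeff 0 p := by
  rw [totalDegree_eq_zero_iff_eq_C.1 (Nat.le_zero.1 hp.totalDegree_le)]
  simp

/-- The trilinear form with given coefficients in the standard basis. -/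
noncomputable def trilinearOfCoeff (c : Fin n → Fin n → Fin n → k) :
    (Fin n → k) →ₗ[k] (Fin n → k) →ₗ[k] (Fin n → k) →ₗ[k] k :=
  ∑ i, ∑ j, ∑ l, c i j l • (LinearMap.proj i : (Fin n → k) →ₗ[k] k).smulRight
    ((LinearMap.proj j : (Fin n → k) →ₗ[k] k).smulRight
      (LinearMap.proj l : (Fin n → k) →ₗ[k] k))

theorem trilinearOfCoeff_apply (c : Fin n → Fin n → Fin n → k) (x y z : Fin n → k) :
    trilinearOfCoeff c x y z = ∑ i, ∑ j, ∑ l, c i j l * x i * y j * z l := by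
  simp [trilinearOfCoeff, LinearMap.sum_apply, mul_assoc]

/-- Every cubic form is the diagonal of a symmetric trilinear form. -/
theorem exists_symmTrilinear_diagonal (h2 : (2 : k) ≠ 0) (h3 : (3 : k) ≠ 0)
    {f : MvPolynomial (Fin n) k} (hf : f.IsHomogeneous 3) :
    ∃ F : (Fin n → k) →ₗ[k] (Fin n → k) →ₗ[k] (Fin n → k) →ₗ[k] k,
      IsSymmTrilinear F ∧ ∀ x, F x x x = eval x f := by
  let c : Fin n → Fin n → Fin n → k := fun i j l =>
    (2 * 3 : k)⁻¹ * coeff 0 (pderiv l (pderiv j (pderiv i f)))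
  refine ⟨trilinearOfCoeff c, ⟨fun x y z => ?_, fun x y z => ?_⟩, fun x => ?_⟩
  · rw [trilinearOfCoeff_apply, trilinearOfCoeff_apply, Finset.sum_comm]
    refine Finset.sum_congr rfl fun i _ => Finset.sum_congr rfl fun j _ =>
      Finset.sum_congr rfl fun l _ => ?_
    simp only [c, pderiv_pderiv_comm i j]
    ring
  · rw [trilinearOfCoeff_apply, trilinearOfCoeff_apply]
    refine Finset.sum_congr rfl fun i _ => ?_
    rw [Finset.sum_comm]
    refine Finset.sum_congr rfl fun j _ => Finset.sum_congr rfl fun l _ => ?_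
    simp only [c, pderiv_pderiv_comm j l]
    ring
  · have e3 := congrArg (eval x) hf.sum_X_mul_pderiv
    have e2 : ∀ i, _ := fun i => congrArg (eval x) (hf.pderiv (i := i)).sum_X_mul_pderiv
    have e1 : ∀ i j, _ := fun i j =>
      congrArg (eval x) ((hf.pderiv (i := i)).pderiv (i := j)).sum_X_mul_pderiv
    have e0 : ∀ i j l, _ := fun i j l =>
      (((hf.pderiv (i := i)).pderiv (i := j)).pderiv (i := l)).eval_zero_eq x
    simp only [map_sum, map_mul, eval_X, nsmul_eq_mul, Nat.add_one_sub_one, e0, Nat.cast_one,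
      one_mul, Nat.cast_ofNat, map_ofNat] at e1 e2 e3
    rw [trilinearOfCoeff_apply]
    have key : ∑ i, ∑ j, ∑ l, coeff 0 (pderiv l (pderiv j (pderiv i f))) * x i * x j * x l =
        (2 * 3) * eval x f := by
      rw [mul_assoc, ← e3, Finset.mul_sum]
      refine Finset.sum_congr rfl fun i _ => ?_
      rw [mul_left_comm, ← e2, Finset.mul_sum]
      refine Finset.sum_congr rfl fun j _ => ?_
      rw [← e1, Finset.mul_sum, Finset.mul_sum]
      refine Finset.sum_congr rfl fun l _ => ?_
      ring
    have h6 : (2 * 3 : k) ≠ 0 := mul_ne_zero h2 h3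
    rw [← mul_right_inj' h6, ← key, Finset.mul_sum]
    refine Finset.sum_congr rfl fun i _ => ?_
    rw [Finset.mul_sum]
    refine Finset.sum_congr rfl fun j _ => ?_
    rw [Finset.mul_sum]
    refine Finset.sum_congr rfl fun l _ => ?_
    simp only [c, ← mul_assoc]
    rw [mul_inv_cancel₀ h6, one_mul]

theorem MvPolynomial.IsHomogeneous.exists_linearMap {p : MvPolynomial (Fin n) k}
    (hp : p.IsHomogeneous 1) : ∃ L : (Fin n → k) →ₗ[k] k, ∀ x, L x = eval x p := by
  refine ⟨∑ i, coeff 0 (pderiv i p) • LinearMap.proj i, fun x => ?_⟩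
  have e1 := congrArg (eval x) hp.sum_X_mul_pderiv
  have e0 : ∀ i, _ := fun i => (hp.pderiv (i := i)).eval_zero_eq x
  simp only [map_sum, map_mul, eval_X, nsmul_eq_mul, e0, Nat.cast_one, one_mul] at e1
  rw [← e1]
  simp [LinearMap.sum_apply, mul_comm]

theorem exists_isHomogeneous_one_eval (L : (Fin n → k) →ₗ[k] k) :
    ∃ p : MvPolynomial (Fin n) k, p.IsHomogeneous 1 ∧ ∀ x, eval x p = L x := by
  refine ⟨∑ i, C (L (Pi.single i 1)) * X i, ?_, fun x => ?_⟩
  · exact IsHomogeneous.sum _ _ _ fun i _ => by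
      simpa using (isHomogeneous_C _ _).mul (isHomogeneous_X _ i)
  · conv_rhs => rw [pi_eq_sum_univ' x]
    simp [mul_comm]

theorem exists_isHomogeneous_two_eval (G : (Fin n → k) →ₗ[k] (Fin n → k) →ₗ[k] k) :
    ∃ p : MvPolynomial (Fin n) k, p.IsHomogeneous 2 ∧ ∀ x, eval x p = G x x := by
  refine ⟨∑ i, ∑ j, C (G (Pi.single i 1) (Pi.single j 1)) * X i * X j, ?_, fun x => ?_⟩
  · exact IsHomogeneous.sum _ _ _ fun i _ => IsHomogeneous.sum _ _ _ fun j _ => by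
      simpa using ((isHomogeneous_C _ _).mul (isHomogeneous_X _ i)).mul (isHomogeneous_X _ j)
  · conv_rhs => rw [pi_eq_sum_univ' x]
    rw [map_sum G, LinearMap.sum_apply]
    simp only [map_sum, map_mul, eval_C, eval_X, map_smul, LinearMap.smul_apply, smul_eq_mul]
    refine Finset.sum_congr rfl fun i _ => Finset.sum_congr rfl fun j _ => ?_
    ring

/-- A polynomial of q-rank at most `m` vanishes on a subspace of codimension at most `m`. -/
theorem exists_subspace_eval_eq_zero {m : ℕ} {f : MvPolynomial (Fin n) k}
    (hf : polyQRank f ≤ m) :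
    ∃ W : Submodule k (Fin n → k), n ≤ finrank k W + m ∧ ∀ x ∈ W, eval x f = 0 := by
  have hne : {r : ℕ∞ | ∃ m : ℕ, r = m ∧ ∃ ℓ q : Fin m → MvPolynomial (Fin n) k,
      (∀ i, (ℓ i).IsHomogeneous 1) ∧ (∀ i, (q i).IsHomogeneous 2) ∧
        f = ∑ i, ℓ i * q i}.Nonempty := by
    by_contra hcon
    rw [Set.not_nonempty_iff_eq_empty] at hcon
    rw [polyQRank, hcon, sInf_empty] at hf
    exact absurd hf (by simp)
  obtain ⟨m', hm', ℓ, q, hℓ, -, hfe⟩ := csInf_mem hne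
  have hmm : m' ≤ m := by
    have : (m' : ℕ∞) ≤ m := by rw [← hm']; exact hf
    exact_mod_cast this
  choose L hL using fun i => (hℓ i).exists_linearMap
  refine ⟨LinearMap.ker (LinearMap.pi L), ?_, fun x hx => ?_⟩
  · have h1 := LinearMap.finrank_range_add_finrank_ker (LinearMap.pi L)
    have h2 := (LinearMap.range (LinearMap.pi L)).finrank_le
    simp only [finrank_fin_fun] at h1 h2
    omega
  · have hx' : ∀ i, eval x (ℓ i) = 0 := fun i => by
      rw [← hL]; exact congrFun (LinearMap.mem_ker.1 hx) i
    rw [hfe]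
    simp [hx']

/-- A cubic form vanishing on a subspace has q-rank at most the codimension of that subspace. -/
theorem polyQRank_le_of_isTotallyIsotropic [Infinite k]
    {F : (Fin n → k) →ₗ[k] (Fin n → k) →ₗ[k] (Fin n → k) →ₗ[k] k} (hF : IsSymmTrilinear F)
    {f : MvPolynomial (Fin n) k} (hf : ∀ x, F x x x = eval x f)
    {W : Submodule k (Fin n → k)} (hW : IsTotallyIsotropic F W) {c : ℕ}
    (hc : finrank k W + c = n) : polyQRank f ≤ c := by
  obtain ⟨V, hWV⟩ := W.exists_isCompl
  have hdim := finrank_add_eq_of_isCompl hWV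
  rw [finrank_fin_fun] at hdim
  let b := finBasisOfFinrankEq k V (show finrank k V = c by omega)
  let πV : (Fin n → k) →ₗ[k] V := V.projectionOnto W hWV.symm
  let v : (Fin n → k) →ₗ[k] (Fin n → k) := V.subtype ∘ₗ πV
  let w : (Fin n → k) →ₗ[k] (Fin n → k) := LinearMap.id - v
  have hw : ∀ x, w x ∈ W := by
    intro x
    simpa [w, v, πV] using sub_projection_mem hWV.symm x
  let G : Fin c → (Fin n → k) →ₗ[k] (Fin n → k) →ₗ[k] k := fun i =>
    (F (b i)).compl₁₂ v v + (3 : k) • (F (b i)).compl₁₂ v w + (3 : k) • (F (b i)).compl₁₂ w w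
  choose ℓ hℓ hℓe using fun i => exists_isHomogeneous_one_eval (b.coord i ∘ₗ πV)
  choose q hq hqe using fun i => exists_isHomogeneous_two_eval (G i)
  refine sInf_le ⟨c, rfl, ℓ, q, hℓ, hq, MvPolynomial.funext fun x => ?_⟩
  have hvx : v x = ∑ i, b.coord i (πV x) • (b i : Fin n → k) := by
    have := congrArg Subtype.val (b.sum_repr (πV x))
    simp only [coe_sum, Submodule.coe_smul] at this
    exact this.symm
  have hxe : x = v x + w x := by simp [w]
  have hsum : ∀ y z, F (v x) y z = ∑ i, b.coord i (πV x) * F (b i) y z := by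
    intro y z
    rw [hvx]
    simp [LinearMap.sum_apply]
  have hexp : F x x x = F (v x) (v x) (v x) + 3 * F (v x) (v x) (w x) +
      3 * F (v x) (w x) (w x) := by
    conv_lhs => rw [hxe]
    simp only [map_add, LinearMap.add_apply]
    rw [hW _ (hw x) _ (hw x) _ (hw x), hF.swap_right (v x) (w x) (v x),
      hF.swap_left (w x) (v x) (v x), hF.swap_right (v x) (w x) (v x),
      hF.swap_left (w x) (v x) (w x), hF.swap_right (w x) (w x) (v x),
      hF.swap_left (w x) (v x) (w x)]
    ring
  rw [← hf, hexp, hsum, hsum, hsum, Finset.mul_sum, Finset.mul_sum, ← Finset.sum_add_distrib,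
    ← Finset.sum_add_distrib, map_sum]
  refine Finset.sum_congr rfl fun i _ => ?_
  rw [map_mul, hℓe, hqe]
  simp only [G, LinearMap.add_apply, LinearMap.smul_apply, LinearMap.compl₁₂_apply, smul_eq_mul,
    LinearMap.comp_apply]
  ring

end CubicForms

section Degeneration

open Module Submodule

variable {k : Type*} [Field k] {n : ℕ}

/-- The limit at `t = 0` of a polynomial one-parameter family lies in the Zariski closure. -/
theorem inZariskiClosure_of_family [Infinite k] {S : Set (MvPolynomial (Fin n) k)} {ι : Type*}
    [Fintype ι] (N : ι → ℕ) (p : ι → MvPolynomial (Fin n) k)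
    (h : ∀ t : k, t ≠ 0 → ∑ a, C (t ^ N a) * p a ∈ S) :
    InZariskiClosure S (∑ a, C ((0 : k) ^ N a) * p a) := by
  intro P hP
  let Q : Polynomial k := eval₂ Polynomial.C
    (fun m => ∑ a, Polynomial.X ^ N a * Polynomial.C (coeff m (p a))) P
  have hQ : ∀ t : k, Polynomial.eval t Q =
      eval (fun m => coeff m (∑ a, C (t ^ N a) * p a)) P := by
    intro t
    have h1 := MvPolynomial.hom_eval₂ P Polynomial.C (Polynomial.evalRingHom t)
      (fun m => ∑ a, Polynomial.X ^ N a * Polynomial.C (coeff m (p a)))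
    have h2 : (Polynomial.evalRingHom t).comp Polynomial.C = RingHom.id k := by
      ext; simp
    rw [h2] at h1
    refine h1.trans ?_
    change eval₂ (RingHom.id k) _ P = eval₂ (RingHom.id k) _ P
    congr 1
    funext m
    simp only [map_sum, coeff_sum, coeff_C_mul]
    refine Finset.sum_congr rfl fun a _ => ?_
    simp only [Polynomial.coe_evalRingHom, Polynomial.eval_mul, Polynomial.eval_pow,
      Polynomial.eval_X, Polynomial.eval_C]
  have hQ0 : Polynomial.X * Q = 0 := by
    refine Polynomial.funext fun t => ?_
    by_cases ht : t = 0
    · simp [ht]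
    · rw [Polynomial.eval_mul, hQ, hP _ (h t ht)]; simp
  have hQ1 : Q = 0 := (mul_eq_zero.1 hQ0).resolve_left Polynomial.X_ne_zero
  rw [← hQ, hQ1, Polynomial.eval_zero]

theorem eval_glAct (g : GL (Fin n) k) (f : MvPolynomial (Fin n) k) (x : Fin n → k) :
    eval x (glAct g f) = eval (fun j => ∑ i, (g : Matrix (Fin n) (Fin n) k) i j * x i) f := by
  have h : (aeval x).comp (aeval fun j => ∑ i, C ((g : Matrix (Fin n) (Fin n) k) i j) * X i) =
      aeval fun j => ∑ i, (g : Matrix (Fin n) (Fin n) k) i j * x i := by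
    ext j
    simp
  have := congrArg (fun φ => φ f) h
  simpa [aeval_eq_eval, glAct] using this

/-- Limits along one-parameter subgroups: the weight-zero part of a cubic form without
negative weights lies in the closure of its orbit. -/
theorem inZariskiClosure_weight_zero [Infinite k]
    {F : (Fin n → k) →ₗ[k] (Fin n → k) →ₗ[k] (Fin n → k) →ₗ[k] k}
    {f : MvPolynomial (Fin n) k} (hf : ∀ x, F x x x = eval x f)
    (b : Basis (Fin n) k (Fin n → k)) (w : Fin n → ℤ)
    (hneg : ∀ i j l, w i + w j + w l < 0 → F (b i) (b j) (b l) = 0) :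
    InZariskiClosure (glOrbit f) (∑ a : Fin n × Fin n × Fin n,
      C ((0 : k) ^ (w a.1 + w a.2.1 + w a.2.2).toNat) *
        (C (F (b a.1) (b a.2.1) (b a.2.2)) * X a.1 * X a.2.1 * X a.2.2)) := by
  refine inZariskiClosure_of_family (fun a : Fin n × Fin n × Fin n =>
    (w a.1 + w a.2.1 + w a.2.2).toNat)
    (fun a => C (F (b a.1) (b a.2.1) (b a.2.2)) * X a.1 * X a.2.1 * X a.2.2) fun t ht => ?_
  let M : Matrix (Fin n) (Fin n) k := Matrix.diagonal (fun i => t ^ w i) * Matrix.of (fun i => b i)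
  have hM : M.det ≠ 0 := by
    rw [Matrix.det_mul, Matrix.det_diagonal]
    refine mul_ne_zero (Finset.prod_ne_zero_iff.2 fun i _ => zpow_ne_zero _ ht) ?_
    have hu : IsUnit (Matrix.of fun i => b i) :=
      Matrix.linearIndependent_rows_iff_isUnit.1 b.linearIndependent
    exact ((Matrix.isUnit_iff_isUnit_det _).1 hu).ne_zero
  refine ⟨Matrix.GeneralLinearGroup.mkOfDetNeZero M hM, MvPolynomial.funext fun x => ?_⟩
  have hvec : (fun j => ∑ i, M i j * x i) = ∑ i, (t ^ w i * x i) • b i := by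
    funext j
    simp only [M, Matrix.diagonal_mul, Matrix.of_apply, Finset.sum_apply, Pi.smul_apply,
      smul_eq_mul]
    exact Finset.sum_congr rfl fun i _ => by ring
  have hev : eval x (glAct (Matrix.GeneralLinearGroup.mkOfDetNeZero M hM) f) =
      eval (fun j => ∑ i, M i j * x i) f := eval_glAct _ _ _
  rw [hev, hvec, ← hf, trilinear_sum_smul, map_sum, Fintype.sum_prod_type]
  refine Finset.sum_congr rfl fun i _ => ?_
  rw [Fintype.sum_prod_type]
  refine Finset.sum_congr rfl fun j _ => Finset.sum_congr rfl fun l _ => ?_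
  simp only [map_mul, eval_C, eval_X]
  by_cases hlt : w i + w j + w l < 0
  · simp [hneg i j l hlt]
  · have hz : t ^ (w i + w j + w l).toNat = t ^ w i * t ^ w j * t ^ w l := by
      rw [← zpow_natCast, Int.toNat_of_nonneg (not_lt.1 hlt), zpow_add₀ ht, zpow_add₀ ht]
    rw [hz]
    ring

/-- The part of the vector `∑ᵢ xᵢ bᵢ` supported on the indices in `I`. -/
def partialVector (b : Fin n → Fin n → k) (I : Finset (Fin n)) (x : Fin n → k) : Fin n → k :=
  ∑ i, ((if i ∈ I then 1 else 0) * x i) • b i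

/-- If the weight-zero triples consist of one index in `I` and two in `J`, the limit is separable. -/
theorem exists_separable_inZariskiClosure [Infinite k]
    {F : (Fin n → k) →ₗ[k] (Fin n → k) →ₗ[k] (Fin n → k) →ₗ[k] k} (hF : IsSymmTrilinear F)
    {f : MvPolynomial (Fin n) k} (hf : ∀ x, F x x x = eval x f)
    (b : Basis (Fin n) k (Fin n → k)) (w : Fin n → ℤ)
    (hneg : ∀ i j l, w i + w j + w l < 0 → F (b i) (b j) (b l) = 0)
    (I J : Finset (Fin n)) (hIJ : Disjoint I J)
    (hzero : ∀ i j l, (if w i + w j + w l = 0 then (1 : k) else 0) =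
      (if i ∈ I then 1 else 0) * (if j ∈ J then 1 else 0) * (if l ∈ J then 1 else 0) +
      (if i ∈ J then 1 else 0) * (if j ∈ I then 1 else 0) * (if l ∈ J then 1 else 0) +
      (if i ∈ J then 1 else 0) * (if j ∈ J then 1 else 0) * (if l ∈ I then 1 else 0)) :
    ∃ g : MvPolynomial (Fin n) k, InZariskiClosure (glOrbit f) g ∧
      (∃ (S : Set (Fin n)) (m : ℕ) (ℓ q : Fin m → MvPolynomial (Fin n) k),
        (∀ i, (ℓ i).IsHomogeneous 1 ∧ ((ℓ i).vars : Set (Fin n)) ⊆ S) ∧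
        (∀ i, (q i).IsHomogeneous 2 ∧ ((q i).vars : Set (Fin n)) ⊆ Sᶜ) ∧
        g = ∑ i, ℓ i * q i) ∧
      ∀ x, eval x g =
        3 * F (partialVector b I x) (partialVector b J x) (partialVector b J x) := by
  have hlim := inZariskiClosure_weight_zero hf b w hneg
  set g := ∑ a : Fin n × Fin n × Fin n, C ((0 : k) ^ (w a.1 + w a.2.1 + w a.2.2).toNat) *
        (C (F (b a.1) (b a.2.1) (b a.2.2)) * X a.1 * X a.2.1 * X a.2.2) with hg
  have heval : ∀ x, eval x g =
      3 * F (partialVector b I x) (partialVector b J x) (partialVector b J x) := by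
    intro x
    have h3 : 3 * F (partialVector b I x) (partialVector b J x) (partialVector b J x) =
        F (partialVector b I x) (partialVector b J x) (partialVector b J x) +
        F (partialVector b J x) (partialVector b I x) (partialVector b J x) +
        F (partialVector b J x) (partialVector b J x) (partialVector b I x) := by
      rw [hF.swap_left (partialVector b J x) (partialVector b I x),
        hF.swap_right (partialVector b J x) (partialVector b J x) (partialVector b I x),
        hF.swap_left (partialVector b J x) (partialVector b I x)]
      ring
    rw [h3]
    simp only [partialVector, trilinear_sum_smul, ← Finset.sum_add_distrib]
    rw [hg, map_sum, Fintype.sum_prod_type]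
    refine Finset.sum_congr rfl fun i _ => ?_
    rw [Fintype.sum_prod_type]
    refine Finset.sum_congr rfl fun j _ => Finset.sum_congr rfl fun l _ => ?_
    simp only [map_mul, eval_C, eval_X]
    by_cases hlt : w i + w j + w l < 0
    · simp [hneg i j l hlt]
    · have hz : (0 : k) ^ (w i + w j + w l).toNat =
          if w i + w j + w l = 0 then (1 : k) else 0 := by
        rw [zero_pow_eq]
        refine if_congr ?_ rfl rfl
        omega
      rw [hz, hzero]
      ring
  clear_value g
  refine ⟨g, hlim, ⟨(I : Set (Fin n)), n, fun i => if i ∈ I then X i else 0,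
    fun i => ∑ j, ∑ l, if j ∈ J ∧ l ∈ J then C (3 * F (b i) (b j) (b l)) * X j * X l else 0,
    fun i => ⟨?_, ?_⟩, fun i => ⟨?_, ?_⟩, ?_⟩, heval⟩
  · dsimp only
    split_ifs
    · exact isHomogeneous_X _ _
    · exact isHomogeneous_zero _ _ _
  · dsimp only
    split_ifs with h
    · rw [vars_X]; simpa using h
    · simp
  · refine IsHomogeneous.sum _ _ _ fun j _ => IsHomogeneous.sum _ _ _ fun l _ => ?_
    split_ifs
    · exact ((isHomogeneous_C _ _).mul (isHomogeneous_X k j)).mul (isHomogeneous_X k l)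
    · exact isHomogeneous_zero _ _ _
  · refine mem_supported.1 ((supported k ((I : Set (Fin n))ᶜ)).sum_mem fun j _ =>
      (supported k ((I : Set (Fin n))ᶜ)).sum_mem fun l _ => ?_)
    split_ifs with h
    · have hc : ∀ j ∈ J, (X j : MvPolynomial (Fin n) k) ∈ supported k ((I : Set (Fin n))ᶜ) :=
        fun j hj => X_mem_supported.2 fun hjI => Finset.disjoint_left.1 hIJ hjI hj
      exact mul_mem (mul_mem (Subalgebra.algebraMap_mem _ _) (hc j h.1)) (hc l h.2)
    · exact zero_mem _
  · refine MvPolynomial.funext fun x => ?_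
    rw [heval, map_sum]
    simp only [partialVector, trilinear_sum_smul]
    rw [Finset.mul_sum]
    refine Finset.sum_congr rfl fun i _ => ?_
    rw [map_mul, map_sum, Finset.mul_sum, Finset.mul_sum]
    refine Finset.sum_congr rfl fun j _ => ?_
    rw [map_sum, Finset.mul_sum, Finset.mul_sum]
    refine Finset.sum_congr rfl fun l _ => ?_
    by_cases hi : i ∈ I <;> by_cases hj : j ∈ J <;> by_cases hl : l ∈ J <;> simp [hi, hj, hl]
    ring

end Degeneration

section MixedParts

open Module Submodule

variable {k : Type*} [Field k] {n : ℕ}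

theorem exists_adapted_basis {E : Type*} [AddCommGroup E] [Module k E] [FiniteDimensional k E]
    (hE : finrank k E = n) {P Q R : Submodule k E} (hPQ : Disjoint P Q)
    (hR : IsCompl (P ⊔ Q) R) :
    ∃ (b : Basis (Fin n) k E) (I J : Finset (Fin n)), Disjoint I J ∧
      (∀ i ∈ I, b i ∈ P) ∧ (∀ i ∈ J, b i ∈ Q) ∧ ∀ i, i ∉ I → i ∉ J → b i ∈ R := by
  classical
  let bP := finBasis k P
  let bQ := finBasis k Q
  let bR := finBasis k R
  have hspan : ∀ (V : Submodule k E) {m : ℕ} (c : Basis (Fin m) k V),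
      span k (Set.range fun i => (c i : E)) = V := by
    intro V m c
    have := congrArg (Submodule.map V.subtype) c.span_eq
    rw [Submodule.map_span, ← Set.range_comp, Submodule.map_top, range_subtype] at this
    exact this
  have hli : ∀ (V : Submodule k E) {m : ℕ} (c : Basis (Fin m) k V),
      LinearIndependent k fun i => (c i : E) := fun V m c =>
    c.linearIndependent.map' V.subtype V.ker_subtype
  have h1 := (hli P bP).sum_type (hli Q bQ) (by rw [hspan, hspan]; exact hPQ)
  have h2 := h1.sum_type (hli R bR) (by
    rw [Set.Sum.elim_range, span_union, hspan, hspan, hspan]; exact hR.disjoint)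
  have hcard : Fintype.card ((Fin (finrank k P) ⊕ Fin (finrank k Q)) ⊕ Fin (finrank k R)) = n := by
    simp only [Fintype.card_sum, Fintype.card_fin]
    rw [← hE, ← finrank_add_eq_of_isCompl hR, finrank_sup_of_disjoint hPQ]
  let e := Fintype.equivFinOfCardEq hcard
  have hli' := h2.comp e.symm e.symm.injective
  let b := basisOfLinearIndependentOfCardEqFinrank' _ hli' (by simp [hE])
  have hb : ∀ i, b i = Sum.elim (Sum.elim (fun i => (bP i : E)) fun i => (bQ i : E))
      (fun i => (bR i : E)) (e.symm i) := fun i => by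
    simp [b]
  refine ⟨b, Finset.univ.filter fun i => ∃ j, e.symm i = .inl (.inl j),
    Finset.univ.filter fun i => ∃ j, e.symm i = .inl (.inr j), ?_, ?_, ?_, ?_⟩
  · rw [Finset.disjoint_left]
    intro i hi hj
    simp only [Finset.mem_filter, Finset.mem_univ, true_and] at hi hj
    obtain ⟨a, ha⟩ := hi
    obtain ⟨c, hc⟩ := hj
    simp [ha] at hc
  · intro i hi
    simp only [Finset.mem_filter, Finset.mem_univ, true_and] at hi
    obtain ⟨a, ha⟩ := hi
    rw [hb, ha]
    exact coe_mem _
  · intro i hi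
    simp only [Finset.mem_filter, Finset.mem_univ, true_and] at hi
    obtain ⟨a, ha⟩ := hi
    rw [hb, ha]
    exact coe_mem _
  · intro i hi hj
    simp only [Finset.mem_filter, Finset.mem_univ, true_and] at hi hj
    rw [hb]
    rcases h : e.symm i with (a | a) | a
    · exact absurd ⟨a, h⟩ hi
    · exact absurd ⟨a, h⟩ hj
    · exact coe_mem _

/-- A subspace on which the mixed part `F(P, Q, Q)` vanishes can be replaced by the sum of a
subspace of `P` and a subspace of `Q`. -/
theorem exists_subspaces_of_mixed_vanishing {E : Type*} [AddCommGroup E] [Module k E]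
    [FiniteDimensional k E] {F : E →ₗ[k] E →ₗ[k] E →ₗ[k] k} (hF : IsSymmTrilinear F)
    (h2 : (2 : k) ≠ 0) {P Q : Submodule k E} {π ρ : E →ₗ[k] E}
    (hπP : ∀ x ∈ P, π x = x) (hπQ : ∀ x ∈ Q, π x = 0)
    (hρQ : ∀ x ∈ Q, ρ x = x)
    {U : Submodule k E} (hU : U ≤ P ⊔ Q) (h : ∀ x ∈ U, F (π x) (ρ x) (ρ x) = 0) :
    ∃ A ≤ P, ∃ B ≤ Q, (∀ a ∈ A, ∀ b ∈ B, ∀ c ∈ B, F a b c = 0) ∧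
      finrank k U = finrank k A + finrank k B := by
  refine ⟨U.map π, ?_, U ⊓ Q, inf_le_right, ?_, ?_⟩
  · rintro _ ⟨x, hx, rfl⟩
    obtain ⟨a, ha, b, hb, rfl⟩ := mem_sup.1 (hU hx)
    rw [map_add, hπP a ha, hπQ b hb, add_zero]
    exact ha
  · have hdiag : ∀ x ∈ U, ∀ b ∈ U ⊓ Q, F (π x) b b = 0 := by
      intro x hx b hb
      have e0 := h x hx
      have e1 := h _ (U.add_mem hx hb.1)
      have e2 := h _ (U.sub_mem hx hb.1)
      simp only [map_add, map_sub, hπQ b hb.2, hρQ b hb.2, add_zero, sub_zero,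
        LinearMap.add_apply, LinearMap.sub_apply] at e1 e2
      have e3 : (2 : k) * F (π x) b b = 0 := by linear_combination e1 + e2 - 2 * e0
      simpa [h2] using e3
    rintro _ ⟨x, hx, rfl⟩ b hb c hc
    have e1 := hdiag x hx _ ((U ⊓ Q).add_mem hb hc)
    simp only [map_add, LinearMap.add_apply, hdiag x hx b hb, hdiag x hx c hc] at e1
    have e3 : (2 : k) * F (π x) b c = 0 := by
      rw [hF.swap_right (π x) c b] at e1
      linear_combination e1
    simpa [h2] using e3
  · have h1 := LinearMap.finrank_range_add_finrank_ker (π.domRestrict U)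
    rw [LinearMap.range_domRestrict] at h1
    rw [← h1]
    congr 1
    have hker : (LinearMap.ker (π.domRestrict U)).map U.subtype = U ⊓ Q := by
      ext y
      constructor
      · rintro ⟨x, hx, rfl⟩
        refine ⟨x.2, ?_⟩
        have hx' : π x = 0 := hx
        obtain ⟨a, ha, b, hb, hab⟩ := mem_sup.1 (hU x.2)
        rw [← hab, map_add, hπP a ha, hπQ b hb, add_zero] at hx'
        rw [subtype_apply, ← hab, hx', zero_add]
        exact hb
      · intro hy
        exact ⟨⟨y, hy.1⟩, hπQ y hy.2, rfl⟩
    rw [← hker]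
    exact (finrank_map_subtype_eq U _).symm

/-- If the separable degenerations of a cubic form have q-rank at most `u`, then the mixed parts
of its polarization are bounded by `u`. -/
theorem mixedPartsBounded_of_polyQRank_le [Infinite k] (h2 : (2 : k) ≠ 0) (h3 : (3 : k) ≠ 0)
    {F : (Fin n → k) →ₗ[k] (Fin n → k) →ₗ[k] (Fin n → k) →ₗ[k] k} (hF : IsSymmTrilinear F)
    {f : MvPolynomial (Fin n) k} (hf : ∀ x, F x x x = eval x f) {u : ℕ}
    (hu : ∀ g : MvPolynomial (Fin n) k, InZariskiClosure (glOrbit f) g →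
      (∃ (S : Set (Fin n)) (m : ℕ) (ℓ q : Fin m → MvPolynomial (Fin n) k),
        (∀ i, (ℓ i).IsHomogeneous 1 ∧ ((ℓ i).vars : Set (Fin n)) ⊆ S) ∧
        (∀ i, (q i).IsHomogeneous 2 ∧ ((q i).vars : Set (Fin n)) ⊆ Sᶜ) ∧
        g = ∑ i, ℓ i * q i) → polyQRank g ≤ u) :
    MixedPartsBounded F u := by
  classical
  intro P Q hPQ hcase
  obtain ⟨R, hR⟩ := (P ⊔ Q).exists_isCompl
  obtain ⟨b, I, J, hIJ, hbP, hbQ, hbR⟩ := exists_adapted_basis (finrank_fin_fun k) hPQ hR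
  have hPc : IsCompl P (Q ⊔ R) := by
    refine ⟨hPQ.disjoint_sup_right_of_disjoint_sup_left hR.disjoint, ?_⟩
    rw [codisjoint_iff, ← sup_assoc, hR.sup_eq_top]
  have hQc : IsCompl Q (P ⊔ R) := by
    rw [sup_comm P Q] at hR
    refine ⟨hPQ.symm.disjoint_sup_right_of_disjoint_sup_left hR.disjoint, ?_⟩
    rw [codisjoint_iff, ← sup_assoc, hR.sup_eq_top]
  have hg : ∃ g : MvPolynomial (Fin n) k, polyQRank g ≤ u ∧ ∀ x, eval x g =
      3 * F (partialVector b I x) (partialVector b J x) (partialVector b J x) := by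
    obtain ⟨p, q, hw⟩ : ∃ p q : ℤ, (p = 2 ∧ q = -1 ∧ IsTotallyIsotropic F Q) ∨
        (p = -2 ∧ q = 1 ∧ IsTotallyIsotropic F P ∧
          ∀ x ∈ P, ∀ y ∈ P, ∀ z ∈ Q, F x y z = 0) := by
      rcases hcase with h | h
      · exact ⟨2, -1, .inl ⟨rfl, rfl, h⟩⟩
      · exact ⟨-2, 1, .inr ⟨rfl, rfl, h⟩⟩
    let w : Fin n → ℤ := fun i => if i ∈ I then p else if i ∈ J then q else 5
    have hwI : ∀ i, i ∈ I → w i = p := fun i hi => if_pos hi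
    have hwJ : ∀ i, i ∈ J → i ∉ I ∧ w i = q := fun i hi => by
      have : i ∉ I := fun h => Finset.disjoint_left.1 hIJ h hi
      exact ⟨this, by simp [w, this, hi]⟩
    have hwR : ∀ i, i ∉ I → i ∉ J → w i = 5 := fun i hi hj => by simp [w, hi, hj]
    have htri : ∀ i, (i ∈ I ∧ i ∉ J ∧ w i = p) ∨ (i ∉ I ∧ i ∈ J ∧ w i = q) ∨
        (i ∉ I ∧ i ∉ J ∧ w i = 5) := by
      intro i
      by_cases hi : i ∈ I
      · exact .inl ⟨hi, Finset.disjoint_left.1 hIJ hi, hwI i hi⟩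
      · by_cases hj : i ∈ J
        · exact .inr (.inl ⟨hi, hj, (hwJ i hj).2⟩)
        · exact .inr (.inr ⟨hi, hj, hwR i hi hj⟩)
    have hneg : ∀ i j l, w i + w j + w l < 0 → F (b i) (b j) (b l) = 0 := by
      intro i j l hlt
      rcases htri i with ⟨hi, hi', hwi⟩ | ⟨hi, hi', hwi⟩ | ⟨hi, hi', hwi⟩ <;>
      rcases htri j with ⟨hj, hj', hwj⟩ | ⟨hj, hj', hwj⟩ | ⟨hj, hj', hwj⟩ <;>
      rcases htri l with ⟨hl, hl', hwl⟩ | ⟨hl, hl', hwl⟩ | ⟨hl, hl', hwl⟩ <;>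
      rcases hw with ⟨hp, hq, hQ⟩ | ⟨hp, hq, hP, hPPQ⟩ <;>
      first
        | (exfalso; omega)
        | exact hQ _ (hbQ _ hi') _ (hbQ _ hj') _ (hbQ _ hl')
        | exact hP _ (hbP _ hi) _ (hbP _ hj) _ (hbP _ hl)
        | exact hPPQ _ (hbP _ hi) _ (hbP _ hj) _ (hbQ _ hl')
        | (rw [hF.swap_right]; exact hPPQ _ (hbP _ hi) _ (hbP _ hl) _ (hbQ _ hj'))
        | (rw [hF.swap_left, hF.swap_right]
           exact hPPQ _ (hbP _ hj) _ (hbP _ hl) _ (hbQ _ hi'))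
    obtain ⟨g, hg, hsep, he⟩ := exists_separable_inZariskiClosure hF hf b w hneg I J hIJ (by
      intro i j l
      rcases htri i with ⟨hi, hi', hwi⟩ | ⟨hi, hi', hwi⟩ | ⟨hi, hi', hwi⟩ <;>
      rcases htri j with ⟨hj, hj', hwj⟩ | ⟨hj, hj', hwj⟩ | ⟨hj, hj', hwj⟩ <;>
      rcases htri l with ⟨hl, hl', hwl⟩ | ⟨hl, hl', hwl⟩ | ⟨hl, hl', hwl⟩ <;>
      rcases hw with ⟨hp, hq, -⟩ | ⟨hp, hq, -⟩ <;>
      simp [hi, hi', hj, hj', hl, hl', hwi, hwj, hwl, hp, hq])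
    exact ⟨g, hu g hg hsep, he⟩
  obtain ⟨g, hgu, hge⟩ := hg
  obtain ⟨K, hKd, hK⟩ := exists_subspace_eval_eq_zero hgu
  let π := P.projection (Q ⊔ R) hPc
  let ρ := Q.projection (P ⊔ R) hQc
  have hπP : ∀ x ∈ P, π x = x := fun x hx => projection_apply_of_mem_left hPc hx
  have hρQ : ∀ x ∈ Q, ρ x = x := fun x hx => projection_apply_of_mem_left hQc hx
  have hπ0 : ∀ x ∈ Q ⊔ R, π x = 0 := fun x hx => (projection_apply_eq_zero_iff hPc).2 hx
  have hρ0 : ∀ x ∈ P ⊔ R, ρ x = 0 := fun x hx => (projection_apply_eq_zero_iff hQc).2 hx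
  have hπe : ∀ x, partialVector b I x = π (b.equivFun.symm x) := by
    intro x
    rw [Basis.equivFun_symm_apply, map_sum, partialVector]
    refine Finset.sum_congr rfl fun i _ => ?_
    rw [map_smul]
    by_cases hi : i ∈ I
    · rw [hπP _ (hbP i hi)]; simp [hi]
    · rw [hπ0 (b i)]
      · simp [hi]
      · by_cases hj : i ∈ J
        · exact mem_sup_left (hbQ i hj)
        · exact mem_sup_right (hbR i hi hj)
  have hρe : ∀ x, partialVector b J x = ρ (b.equivFun.symm x) := by
    intro x
    rw [Basis.equivFun_symm_apply, map_sum, partialVector]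
    refine Finset.sum_congr rfl fun i _ => ?_
    rw [map_smul]
    by_cases hj : i ∈ J
    · rw [hρQ _ (hbQ i hj)]; simp [hj]
    · rw [hρ0 (b i)]
      · simp [hj]
      · by_cases hi : i ∈ I
        · exact mem_sup_left (hbP i hi)
        · exact mem_sup_right (hbR i hi hj)
  let K' : Submodule k (Fin n → k) := K.map (b.equivFun.symm : (Fin n → k) →ₗ[k] (Fin n → k))
  have hK'd : finrank k K' = finrank k K := LinearEquiv.finrank_map_eq b.equivFun.symm K
  obtain ⟨A, hA, B, hB, hABB, hdim⟩ := exists_subspaces_of_mixed_vanishing hF h2 hπP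
    (fun x hx => hπ0 x (mem_sup_left hx)) hρQ
    (U := K' ⊓ (P ⊔ Q)) inf_le_right (by
      rintro _ ⟨⟨x, hx, rfl⟩, -⟩
      have h1 := hK x hx
      rw [hge, hπe, hρe] at h1
      exact (mul_eq_zero.1 h1).resolve_left h3)
  refine ⟨A, hA, B, hB, hABB, ?_⟩
  have h4 := finrank_sup_add_finrank_inf_eq K' (P ⊔ Q)
  have h5 := (K' ⊔ (P ⊔ Q)).finrank_le
  rw [finrank_sup_of_disjoint hPQ] at h4
  rw [finrank_fin_fun] at h5
  omega

end MixedParts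

/-- A cubic form whose polarization is annihilated by a hyperplane is a cube. -/
theorem exists_eq_cube {k : Type*} [Field k] [IsAlgClosed k] {n : ℕ}
    {F : (Fin n → k) →ₗ[k] (Fin n → k) →ₗ[k] (Fin n → k) →ₗ[k] k} (hF : IsSymmTrilinear F)
    {f : MvPolynomial (Fin n) k} (hf : ∀ x, F x x x = eval x f)
    {W : Submodule k (Fin n → k)} (hWd : Module.finrank k W + 1 = n)
    (hW : ∀ w ∈ W, ∀ x y, F w x y = 0) :
    ∃ l : MvPolynomial (Fin n) k, l.IsHomogeneous 1 ∧ f = l ^ 3 := by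
  have : Infinite k := IsAlgClosed.instInfinite
  obtain ⟨V, hWV⟩ := W.exists_isCompl
  have hdim := Submodule.finrank_add_eq_of_isCompl hWV
  rw [Module.finrank_fin_fun] at hdim
  let b := Module.finBasisOfFinrankEq k V (show Module.finrank k V = 1 by omega)
  let v : Fin n → k := b 0
  obtain ⟨γ, hγ⟩ := IsAlgClosed.exists_pow_nat_eq (F v v v) (n := 3) (by norm_num)
  let L : (Fin n → k) →ₗ[k] k := b.coord 0 ∘ₗ V.projectionOnto W hWV.symm
  obtain ⟨l, hl, hle⟩ := exists_isHomogeneous_one_eval (γ • L)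
  refine ⟨l, hl, MvPolynomial.funext fun x => ?_⟩
  have hx : x = L x • v + (x - L x • v) := by abel
  have hmem : x - L x • v ∈ W := by
    have h1 := congrArg Subtype.val (b.sum_repr (V.projectionOnto W hWV.symm x))
    rw [Fin.sum_univ_one, Submodule.coe_smul] at h1
    have h2 := Submodule.sub_projection_mem hWV.symm x
    rw [Submodule.projection_apply, ← h1] at h2
    exact h2
  generalize x - L x • v = w at hx hmem
  have hw := hW w hmem
  rw [← hf, map_pow, hle]
  conv_lhs => rw [hx]
  simp only [map_add, LinearMap.add_apply, map_smul, LinearMap.smul_apply, hw,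
    hF.swap_left v w, hF.swap_right v v w, smul_eq_mul, ← hγ]
  ring

theorem xi_eq_zero {r : ℕ} (h : xi r = 0) : r = 0 := by
  by_contra hr
  have h1 : (1 : ℝ) ≤ r := by exact_mod_cast Nat.one_le_iff_ne_zero.2 hr
  have h2 : (5 : ℝ) ≤ Real.sqrt (8 * r + 17) := Real.le_sqrt_of_sq_le (by linarith)
  have h3 : 1 ≤ xi r := Nat.le_floor (by push_cast; linarith)
  omega

theorem mul_le_of_le_xi {T r : ℕ} (hT : T ≠ 0) (h : T ≤ xi r) : T * (T + 3) ≤ 2 * r + 2 := by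
  have h1 := (Nat.le_floor_iff' hT).1 h
  have h2 : (2 * T + 3 : ℝ) ≤ Real.sqrt (8 * r + 17) := by linarith
  have h3 := Real.le_sqrt' (by positivity) |>.1 h2
  have h4 : (T * (T + 3) : ℝ) ≤ 2 * r + 2 := by nlinarith
  exact_mod_cast h4

theorem InZariskiClosure.self_glOrbit {k : Type*} [Field k] {n : ℕ}
    (f : MvPolynomial (Fin n) k) : InZariskiClosure (glOrbit f) f := by
  intro P hP
  refine hP f ⟨1, ?_⟩
  simp [glAct, Matrix.one_apply]

theorem separable_degeneration {k : Type*} [Field k] [IsAlgClosed k]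
    (h2 : (2 : k) ≠ 0) (h3 : (3 : k) ≠ 0) {n : ℕ}
    (f : MvPolynomial (Fin n) k) (hf : f.IsHomogeneous 3)
    (hcube : ∀ l : MvPolynomial (Fin n) k, l.IsHomogeneous 1 → l ≠ 0 → f ≠ l ^ 3)
    (r : ℕ) (hr : polyQRank f = (r : ℕ∞)) :
    ∃ g : MvPolynomial (Fin n) k, InZariskiClosure (glOrbit f) g ∧
      ∃ (S : Set (Fin n)) (m : ℕ) (ℓ q : Fin m → MvPolynomial (Fin n) k),
        (∀ i, (ℓ i).IsHomogeneous 1 ∧ ((ℓ i).vars : Set (Fin n)) ⊆ S) ∧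
        (∀ i, (q i).IsHomogeneous 2 ∧ ((q i).vars : Set (Fin n)) ⊆ Sᶜ) ∧
        g = ∑ i, ℓ i * q i ∧
        (xi r : ℕ∞) ≤ 2 * polyQRank g := by
  have : Infinite k := IsAlgClosed.instInfinite
  obtain ⟨F, hF, hFf⟩ := exists_symmTrilinear_diagonal h2 h3 hf
  obtain ⟨W, hWd, hW0⟩ := exists_subspace_eval_eq_zero hr.le
  have hW : IsTotallyIsotropic F W :=
    IsTotallyIsotropic.of_diagonal hF h2 h3 fun x hx => by rw [hFf, hW0 x hx]
  have hmax : ∀ W : Submodule k (Fin n → k), IsTotallyIsotropic F W →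
      Module.finrank k W + r ≤ Module.finrank k (Fin n → k) := by
    intro W hW
    have hle := W.finrank_le
    rw [Module.finrank_fin_fun] at hle ⊢
    have := polyQRank_le_of_isTotallyIsotropic hF hFf hW (Nat.add_sub_of_le hle)
    rw [hr] at this
    have : r ≤ n - Module.finrank k W := by exact_mod_cast this
    omega
  have hWr : Module.finrank k W + r = n := by
    have := hmax W hW
    rw [Module.finrank_fin_fun] at this
    omega
  rcases Nat.eq_zero_or_pos (xi r) with hxi | hxi
  · have hr0 := xi_eq_zero hxi
    have hWtop : W = ⊤ := Submodule.eq_top_of_finrank_eq (by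
      rw [Module.finrank_fin_fun]; omega)
    have hf0 : f = 0 := MvPolynomial.funext fun x => by
      rw [hW0 x (hWtop ▸ Submodule.mem_top), map_zero]
    exact ⟨f, .self_glOrbit f, ∅, 0, Fin.elim0, Fin.elim0, fun i => i.elim0, fun i => i.elim0,
      by simpa using hf0, by simp [hxi]⟩
  · by_contra hcon
    obtain ⟨u, hu1, hu2⟩ : ∃ u, 2 * u + 1 ≤ xi r ∧ xi r ≤ 2 * u + 2 :=
      ⟨(xi r - 1) / 2, by omega, by omega⟩
    have hK : MixedPartsBounded F u := by
      refine mixedPartsBounded_of_polyQRank_le h2 h3 hF hFf ?_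
      rintro g hg ⟨S, m, ℓ, q, hℓ, hq, hge⟩
      by_contra hlt
      refine hcon ⟨g, hg, S, m, ℓ, q, hℓ, hq, hge, ?_⟩
      have h1 : ((u + 1 : ℕ) : ℕ∞) ≤ polyQRank g := by
        push_cast
        exact Order.add_one_le_of_lt (not_le.1 hlt)
      calc (xi r : ℕ∞) ≤ ((2 * (u + 1) : ℕ) : ℕ∞) := by exact_mod_cast by omega
        _ = 2 * ((u + 1 : ℕ) : ℕ∞) := by push_cast; rfl
        _ ≤ 2 * polyQRank g := by gcongr
    obtain ⟨hr1, hWF⟩ := hK.eq_one_and_annihilated hF hmax hW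
      (by rw [Module.finrank_fin_fun]; exact hWr) (mul_le_of_le_xi (by omega) hu1)
    obtain ⟨l, hl, hfl⟩ := exists_eq_cube hF hFf (by omega) hWF
    refine hcube l hl (fun hl0 => ?_) hfl
    have htop : IsTotallyIsotropic F ⊤ :=
      IsTotallyIsotropic.of_diagonal hF h2 h3 fun x _ => by rw [hFf, hfl, hl0]; simp
    have := hmax ⊤ htop
    rw [finrank_top] at this
    omega
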